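/- arXiv:1111.4728 — 3 statements merged into one kernel-verified Lean document; each statement's English description precedes it below -/
import Mathlib

section
/- Fix an integer d ≥ 1, a viscosity parameter ϰ > 0, and a constant c > 0. Let φ: ℝ^d → ℝ be measurable with L := sup_{x ∈ ℝ^d} e^{c‖x‖}|φ(x)| < ∞. Then for every t > 0 and every x ∈ ℝ^d, e^{−8c²ϰt + c‖x‖} · |(p_t * φ)(x)| ≤ 2^{d/2} · L. -/
open MeasureTheory Real

/-- The heat kernel for `(ϰ/2)Δ` on `ℝ^d`. -/
noncomputable def heatKernel (d : ℕ) (ϰ : ℝ) (t : ℝ) (z : EuclideanSpace ℝ (Fin d)) : ℝ :=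
  (2 * π * ϰ * t) ^ (-(d : ℝ) / 2) * Real.exp (-‖z‖ ^ 2 / (2 * ϰ * t))

/-! Young's inequality absorbs the weight `exp (a * ‖z‖)` into the heat kernel at the cost of
running it `p > 1` times longer: `exp (a * ‖z‖) * heatKernel d ϰ t z` is at most
`heatKernel d ϰ (p * t) z` up to the factor `p ^ (d / 2) * exp (p * a ^ 2 * ϰ * t / (2 * (p - 1)))`.
Since `c * ‖x‖ ≤ |c| * ‖x - y‖ + c * ‖y‖`, the weight `exp (c * ‖x‖)` splits between the kernel and
`φ`, and the kernel at time `p * t` has total mass one. The choice `p = 2` gives the constant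
`2 ^ (d / 2)`, with `c ^ 2 * ϰ * t` in the exponent. -/

lemma mul_sub_sq_div_le {p s : ℝ} (hp : 1 < p) (hs : 0 < s) (a r : ℝ) :
    a * r - r ^ 2 / (2 * s) ≤ p * a ^ 2 * s / (2 * (p - 1)) - r ^ 2 / (2 * (p * s)) := by
  have : 0 < p := by linarith
  have : 0 < p - 1 := sub_pos.2 hp
  have complete_square : p * a ^ 2 * s / (2 * (p - 1)) - r ^ 2 / (2 * (p * s)) -
      (a * r - r ^ 2 / (2 * s)) = (p * a * s - (p - 1) * r) ^ 2 / (2 * p * s * (p - 1)) := by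
    field_simp
    ring
  rw [← sub_nonneg, complete_square]
  positivity

lemma mul_norm_le_abs_mul_norm_sub_add {E : Type*} [SeminormedAddCommGroup E] (c : ℝ) (x y : E) :
    c * ‖x‖ ≤ |c| * ‖x - y‖ + c * ‖y‖ := by
  have h : c * (‖x‖ - ‖y‖) ≤ |c| * ‖x - y‖ :=
    calc c * (‖x‖ - ‖y‖) ≤ |c| * |‖x‖ - ‖y‖| := by rw [← abs_mul]; exact le_abs_self _
      _ ≤ |c| * ‖x - y‖ := by gcongr; exact abs_norm_sub_norm_le x y
  linarith

section HeatKernel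

variable {d : ℕ} {ϰ t : ℝ}

lemma heatKernel_nonneg (hϰ : 0 < ϰ) (ht : 0 < t) (z : EuclideanSpace ℝ (Fin d)) :
    0 ≤ heatKernel d ϰ t z := by
  unfold heatKernel
  positivity

lemma continuous_heatKernel : Continuous (heatKernel d ϰ t) := by
  unfold heatKernel
  fun_prop

lemma integral_heatKernel (hϰ : 0 < ϰ) (ht : 0 < t) : ∫ z, heatKernel d ϰ t z = 1 := by
  have hvar : 0 < 2 * π * ϰ * t := by positivity
  have hrate : 0 < (2 * ϰ * t)⁻¹ := by positivity
  calc ∫ z, heatKernel d ϰ t z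
      = (2 * π * ϰ * t) ^ (-(d : ℝ) / 2) *
          ∫ z : EuclideanSpace ℝ (Fin d), rexp (-(2 * ϰ * t)⁻¹ * ‖z‖ ^ 2) := by
        rw [← integral_const_mul]
        congr with z
        rw [heatKernel, neg_mul, inv_mul_eq_div, neg_div _ (‖z‖ ^ 2)]
    _ = (2 * π * ϰ * t) ^ (-(d : ℝ) / 2) * (2 * π * ϰ * t) ^ ((d : ℝ) / 2) := by
        rw [GaussianFourier.integral_rexp_neg_mul_sq_norm hrate, finrank_euclideanSpace_fin,
          div_inv_eq_mul]
        ring_nf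
    _ = 1 := by rw [← rpow_add hvar, neg_div, neg_add_cancel, rpow_zero]

lemma integrable_heatKernel (hϰ : 0 < ϰ) (ht : 0 < t) : Integrable (heatKernel d ϰ t) :=
  .of_integral_ne_zero <| by simp [integral_heatKernel hϰ ht]

lemma exp_mul_norm_mul_heatKernel_le {p : ℝ} (hp : 1 < p) (hϰ : 0 < ϰ) (ht : 0 < t) (a : ℝ)
    (z : EuclideanSpace ℝ (Fin d)) :
    rexp (a * ‖z‖) * heatKernel d ϰ t z ≤
      p ^ ((d : ℝ) / 2) * rexp (p * a ^ 2 * (ϰ * t) / (2 * (p - 1))) *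
        heatKernel d ϰ (p * t) z := by
  have hp₀ : 0 < p := by linarith
  have normalization : (2 * π * ϰ * t) ^ (-(d : ℝ) / 2) =
      p ^ ((d : ℝ) / 2) * (2 * π * ϰ * (p * t)) ^ (-(d : ℝ) / 2) := by
    rw [mul_left_comm _ p t, mul_rpow hp₀.le (by positivity), ← mul_assoc, ← rpow_add hp₀, neg_div,
      add_neg_cancel, rpow_zero, one_mul]
  have exponent : a * ‖z‖ + -‖z‖ ^ 2 / (2 * ϰ * t) ≤
      p * a ^ 2 * (ϰ * t) / (2 * (p - 1)) + -‖z‖ ^ 2 / (2 * ϰ * (p * t)) := by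
    convert mul_sub_sq_div_le hp (mul_pos hϰ ht) a ‖z‖ using 1 <;> ring
  calc rexp (a * ‖z‖) * heatKernel d ϰ t z
      = (2 * π * ϰ * t) ^ (-(d : ℝ) / 2) * rexp (a * ‖z‖ + -‖z‖ ^ 2 / (2 * ϰ * t)) := by
        rw [heatKernel, exp_add]
        ring
    _ ≤ (2 * π * ϰ * t) ^ (-(d : ℝ) / 2) *
          rexp (p * a ^ 2 * (ϰ * t) / (2 * (p - 1)) + -‖z‖ ^ 2 / (2 * ϰ * (p * t))) := by gcongr
    _ = _ := by
        rw [normalization, heatKernel, exp_add]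
        ring

variable {E : Type*} [NormedAddCommGroup E] [NormedSpace ℝ E]

lemma exp_mul_norm_heatKernel_smul_le {p c L : ℝ} (hp : 1 < p) (hϰ : 0 < ϰ) (ht : 0 < t)
    {x y : EuclideanSpace ℝ (Fin d)} {v : E} (hv : rexp (c * ‖y‖) * ‖v‖ ≤ L) :
    rexp (-(p * c ^ 2 * (ϰ * t) / (2 * (p - 1))) + c * ‖x‖) * ‖heatKernel d ϰ t (x - y) • v‖ ≤
      p ^ ((d : ℝ) / 2) * L * heatKernel d ϰ (p * t) (x - y) := by
  set K := p * c ^ 2 * (ϰ * t) / (2 * (p - 1))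
  have hker : 0 ≤ heatKernel d ϰ t (x - y) := heatKernel_nonneg hϰ ht (x - y)
  have kernel_bound : rexp (|c| * ‖x - y‖) * heatKernel d ϰ t (x - y) ≤
      p ^ ((d : ℝ) / 2) * rexp K * heatKernel d ϰ (p * t) (x - y) := by
    simpa only [sq_abs] using exp_mul_norm_mul_heatKernel_le hp hϰ ht |c| (x - y)
  calc rexp (-K + c * ‖x‖) * ‖heatKernel d ϰ t (x - y) • v‖
      ≤ rexp (-K + (|c| * ‖x - y‖ + c * ‖y‖)) * ‖heatKernel d ϰ t (x - y) • v‖ := by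
        gcongr
        exact mul_norm_le_abs_mul_norm_sub_add c x y
    _ = rexp (-K) * (rexp (|c| * ‖x - y‖) * heatKernel d ϰ t (x - y)) *
          (rexp (c * ‖y‖) * ‖v‖) := by
        rw [norm_smul, norm_of_nonneg hker, exp_add, exp_add]
        ring
    _ ≤ rexp (-K) * (p ^ ((d : ℝ) / 2) * rexp K * heatKernel d ϰ (p * t) (x - y)) * L :=
        mul_le_mul (by gcongr) hv (by positivity)
          (mul_nonneg (exp_nonneg _) (le_trans (by positivity) kernel_bound))
    _ = rexp (-K + K) * (p ^ ((d : ℝ) / 2) * L * heatKernel d ϰ (p * t) (x - y)) := by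
        rw [exp_add]
        ring
    _ = _ := by rw [neg_add_cancel, exp_zero, one_mul]

theorem stmt1_general {p c L : ℝ} (hp : 1 < p) (hϰ : 0 < ϰ) (ht : 0 < t)
    {φ : EuclideanSpace ℝ (Fin d) → E} (hφ : AEStronglyMeasurable φ)
    (hL : ∀ᵐ y, rexp (c * ‖y‖) * ‖φ y‖ ≤ L) (x : EuclideanSpace ℝ (Fin d)) :
    Integrable (fun y ↦ heatKernel d ϰ t (x - y) • φ y) ∧
      rexp (-(p * c ^ 2 * (ϰ * t) / (2 * (p - 1))) + c * ‖x‖) *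
        ∫ y, ‖heatKernel d ϰ t (x - y) • φ y‖ ≤ p ^ ((d : ℝ) / 2) * L := by
  set w := rexp (-(p * c ^ 2 * (ϰ * t) / (2 * (p - 1))) + c * ‖x‖)
  have hpt : 0 < p * t := mul_pos (by linarith) ht
  have hdom : Integrable fun y ↦ p ^ ((d : ℝ) / 2) * L * heatKernel d ϰ (p * t) (x - y) :=
    ((integrable_heatKernel hϰ hpt).comp_sub_left x).const_mul _
  have hbound : ∀ᵐ y, w * ‖heatKernel d ϰ t (x - y) • φ y‖ ≤
      p ^ ((d : ℝ) / 2) * L * heatKernel d ϰ (p * t) (x - y) :=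
    hL.mono fun y hy ↦ exp_mul_norm_heatKernel_smul_le hp hϰ ht hy
  have hmeas : AEStronglyMeasurable fun y ↦ heatKernel d ϰ t (x - y) • φ y :=
    (continuous_heatKernel.comp (continuous_const.sub continuous_id)).aestronglyMeasurable.smul hφ
  have hint : Integrable fun y ↦ heatKernel d ϰ t (x - y) • φ y := by
    refine (hdom.const_mul w⁻¹).mono' hmeas (hbound.mono fun y hy ↦ ?_)
    rwa [le_inv_mul_iff₀ (exp_pos _)]
  refine ⟨hint, ?_⟩
  calc w * ∫ y, ‖heatKernel d ϰ t (x - y) • φ y‖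
      = ∫ y, w * ‖heatKernel d ϰ t (x - y) • φ y‖ := (integral_const_mul _ _).symm
    _ ≤ ∫ y, p ^ ((d : ℝ) / 2) * L * heatKernel d ϰ (p * t) (x - y) :=
        integral_mono_ae (hint.norm.const_mul w) hdom hbound
    _ = p ^ ((d : ℝ) / 2) * L := by
        rw [integral_const_mul, integral_sub_left_eq_self (heatKernel d ϰ (p * t)) volume x,
          integral_heatKernel hϰ hpt, mul_one]

end HeatKernel

/-- If `φ` is measurable with `e^{c‖x‖}|φ(x)| ≤ L` for all `x`, then for
all `t > 0` and `x ∈ ℝ^d`, `e^{-8c²ϰt + c‖x‖}|(p_t*φ)(x)| ≤ 2^{d/2} L`. -/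
theorem stmt1 (d : ℕ) (hd : 1 ≤ d) (ϰ c : ℝ) (hϰ : 0 < ϰ) (hc : 0 < c)
    (φ : EuclideanSpace ℝ (Fin d) → ℝ) (hφ : Measurable φ)
    (L : ℝ) (hL : ∀ x, Real.exp (c * ‖x‖) * |φ x| ≤ L)
    (t : ℝ) (ht : 0 < t) (x : EuclideanSpace ℝ (Fin d)) :
    Real.exp (-(8 * c ^ 2 * ϰ * t) + c * ‖x‖) *
      |∫ y, heatKernel d ϰ t (x - y) * φ y| ≤ 2 ^ ((d : ℝ) / 2) * L := by
  have sharper := (stmt1_general one_lt_two hϰ ht hφ.aestronglyMeasurable (.of_forall hL) x).2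
  refine le_trans ?_ sharper
  have : 0 ≤ c ^ 2 * (ϰ * t) := by positivity
  gcongr
  · linarith
  · exact norm_integral_le_integral_norm fun y ↦ heatKernel d ϰ t (x - y) * φ y
end

section
/- Fix ϰ > 0 and let p_s(y) := (2πϰs)^{-1/2} · exp(−y²/(2ϰs)) be the one-dimensional heat kernel. Then for all s > 0 and x ∈ ℝ, ∫_{−∞}^{∞} |p_s(y − x) − p_s(y)| dy ≤ √(2/(πϰs)) · |x|. -/
open MeasureTheory Real

/-- The one-dimensional heat kernel with viscosity `ϰ`. -/
noncomputable def heatKernel1 (ϰ : ℝ) (s : ℝ) (y : ℝ) : ℝ :=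
  (2 * π * ϰ * s) ^ (-(1 : ℝ) / 2) * Real.exp (-y ^ 2 / (2 * ϰ * s))

/-!
Let `f` be integrable, even and decreasing on `[0, ∞)`. Recentring at the midpoint of `0` and `x`,
the integral of `|f (y - x) - f y|` becomes that of the even function
`|f (y - |x| / 2) - f (y + |x| / 2)|`, whose inner difference is nonnegative for `y > 0`. Twice the
integral over `y > 0` telescopes to `2 ∫ f` over `[-|x| / 2, |x| / 2]`, which is at most
`2 f(0) |x|`. For the heat kernel, `2 p_s(0) = √(2 / (πϰs))`.
-/

open Set

lemma even_apply_abs {α β : Type*} [AddGroup α] [LinearOrder α] {f : α → β} (heven : f.Even)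
    (y : α) : f |y| = f y := by
  rcases abs_choice y with h | h
  · rw [h]
  · rw [h, heven]

lemma even_apply_le_of_abs_le {α β : Type*} [AddCommGroup α] [LinearOrder α]
    [IsOrderedAddMonoid α] [Preorder β] {f : α → β} (heven : f.Even)
    (hanti : AntitoneOn f (Ici 0)) {y z : α} (h : |y| ≤ |z|) : f z ≤ f y := by
  rw [← even_apply_abs heven y, ← even_apply_abs heven z]
  exact hanti (abs_nonneg y) (abs_nonneg z) h

lemma integral_comp_add_right_Ioi {E : Type*} [NormedAddCommGroup E] [NormedSpace ℝ E]
    (g : ℝ → E) (a c : ℝ) : ∫ y in Ioi a, g (y + c) = ∫ y in Ioi (a + c), g y := by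
  have htranslate := (measurePreserving_add_right volume c).setIntegral_preimage_emb
    (MeasurableEquiv.addRight c).measurableEmbedding g (Ioi (a + c))
  rwa [preimage_add_const_Ioi, add_sub_cancel_right] at htranslate

lemma integral_Ioi_sub_translates {E : Type*} [NormedAddCommGroup E] [NormedSpace ℝ E]
    {g : ℝ → E} (hg : Integrable g) (a b c : ℝ) :
    ∫ y in Ioi a, (g (y + b) - g (y + c)) = ∫ y in (a + b)..(a + c), g y := by
  rw [integral_sub (hg.comp_add_right b).integrableOn (hg.comp_add_right c).integrableOn,
    integral_comp_add_right_Ioi, integral_comp_add_right_Ioi,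
    intervalIntegral.integral_Ioi_sub_Ioi' hg.integrableOn hg.integrableOn]

section Translation

variable {f : ℝ → ℝ}

lemma integral_abs_sub_symm_translates (hf : Integrable f) (heven : f.Even)
    (hanti : AntitoneOn f (Ici 0)) {h : ℝ} (hh : 0 ≤ h) :
    ∫ y, |f (y - h) - f (y + h)| = 2 * ∫ y in (-h)..h, f y := by
  have heven_diff : Function.Even fun y ↦ |f (y - h) - f (y + h)| := fun y ↦ by
    have hleft : f (-y - h) = f (y + h) := by rw [← heven, neg_sub, sub_neg_eq_add, add_comm]
    have hright : f (-y + h) = f (y - h) := by rw [← heven, neg_add, neg_neg, sub_eq_add_neg]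
    simp only [hleft, hright, abs_sub_comm]
  have hpos : ∀ y ∈ Ioi (0 : ℝ), |f (y - h) - f (y + h)| = f (y + -h) - f (y + h) := by
    intro y (hy : 0 < y)
    refine abs_of_nonneg (sub_nonneg.2 (even_apply_le_of_abs_le heven hanti ?_))
    rw [abs_of_nonneg (add_nonneg hy.le hh), abs_le]
    constructor <;> linarith
  calc ∫ y, |f (y - h) - f (y + h)|
      = 2 * ∫ y in Ioi 0, |f (y - h) - f (y + h)| := by
        rw [← integral_comp_abs (f := fun y ↦ |f (y - h) - f (y + h)|)]
        exact integral_congr_ae (.of_forall fun y ↦ (even_apply_abs heven_diff y).symm)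
    _ = 2 * ∫ y in Ioi 0, (f (y + -h) - f (y + h)) := by
        rw [setIntegral_congr_fun measurableSet_Ioi hpos]
    _ = 2 * ∫ y in (-h)..h, f y := by
        rw [integral_Ioi_sub_translates hf, zero_add, zero_add]

lemma integral_abs_translate_sub (hf : Integrable f) (heven : f.Even)
    (hanti : AntitoneOn f (Ici 0)) (x : ℝ) :
    ∫ y, |f (y - x) - f y| = 2 * ∫ y in (-(|x| / 2))..(|x| / 2), f y := by
  rw [← integral_abs_sub_symm_translates hf heven hanti (by positivity),
    ← integral_add_right_eq_self _ (x / 2)]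
  congr! 2 with _
  rcases abs_cases x with ⟨hx, -⟩ | ⟨hx, -⟩
  · rw [hx]
    ring_nf
  · rw [hx, abs_sub_comm]
    ring_nf

lemma integral_abs_translate_sub_le (hf : Integrable f) (heven : f.Even)
    (hanti : AntitoneOn f (Ici 0)) (x : ℝ) :
    ∫ y, |f (y - x) - f y| ≤ 2 * f 0 * |x| := by
  have hmax : ∀ y, f y ≤ f 0 := fun y ↦ even_apply_le_of_abs_le heven hanti (by simp)
  have hbound : ∫ y in (-(|x| / 2))..(|x| / 2), f y ≤ f 0 * |x| := calc
    _ ≤ ∫ _ in (-(|x| / 2))..(|x| / 2), f 0 :=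
      intervalIntegral.integral_mono (by linarith [abs_nonneg x]) hf.intervalIntegrable
        intervalIntegrable_const hmax
    _ = f 0 * |x| := by
      rw [intervalIntegral.integral_const, smul_eq_mul]
      ring
  rw [integral_abs_translate_sub hf heven hanti, mul_assoc]
  gcongr

end Translation

lemma heatKernel1_even (ϰ s : ℝ) : (heatKernel1 ϰ s).Even := fun y ↦ by
  simp only [heatKernel1, neg_sq]

lemma heatKernel1_antitoneOn {ϰ s : ℝ} (hϰ : 0 < ϰ) (hs : 0 < s) :
    AntitoneOn (heatKernel1 ϰ s) (Ici 0) := by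
  intro y (hy : 0 ≤ y) z _ hyz
  unfold heatKernel1
  gcongr

lemma integrable_heatKernel1 {ϰ s : ℝ} (hϰ : 0 < ϰ) (hs : 0 < s) :
    Integrable (heatKernel1 ϰ s) := by
  have hgauss : Integrable fun y : ℝ ↦ exp (-(2 * ϰ * s)⁻¹ * y ^ 2) :=
    integrable_exp_neg_mul_sq (by positivity)
  refine (hgauss.const_mul ((2 * π * ϰ * s) ^ (-(1 : ℝ) / 2))).congr (.of_forall fun y ↦ ?_)
  simp only [heatKernel1]
  ring_nf

lemma two_mul_heatKernel1_zero (ϰ s : ℝ) : 2 * heatKernel1 ϰ s 0 = √(2 / (π * ϰ * s)) := by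
  have hzero : heatKernel1 ϰ s 0 = √((2 * π * ϰ * s)⁻¹) := by
    simp [heatKernel1, neg_div, rpow_neg_eq_inv_rpow, sqrt_eq_rpow]
  calc 2 * heatKernel1 ϰ s 0 = √(2 ^ 2) * √((2 * π * ϰ * s)⁻¹) := by
        rw [hzero, sqrt_sq zero_le_two]
    _ = √(2 / (π * ϰ * s)) := by
        rw [← sqrt_mul (by positivity)]
        congr 1
        simp only [mul_inv, div_eq_mul_inv]
        ring

/-- For all `s > 0` and `x ∈ ℝ`,
`∫ |p_s(y-x) - p_s(y)| dy ≤ √(2/(πϰs)) |x|`. -/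
theorem stmt3 (ϰ : ℝ) (hϰ : 0 < ϰ) (s : ℝ) (hs : 0 < s) (x : ℝ) :
    ∫ y : ℝ, |heatKernel1 ϰ s (y - x) - heatKernel1 ϰ s y| ≤
      Real.sqrt (2 / (π * ϰ * s)) * |x| := by
  rw [← two_mul_heatKernel1_zero]
  exact integral_abs_translate_sub_le (integrable_heatKernel1 hϰ hs) (heatKernel1_even ϰ s)
    (heatKernel1_antitoneOn hϰ hs) x
end

section
/- Fix an integer d ≥ 1, α ∈ (0, d), and a viscosity parameter ϰ > 0. There exists a constant C = C(d, α) < ∞ such that for all r > 0 and all x, y ∈ ℝ^d, ∫_{ℝ^d} ∫_{ℝ^d} |p_r(w − x) − p_r(w − y)| · |p_r(z − x) − p_r(z − y)| · ‖w − z‖^{−α} dw dz ≤ C · (ϰr)^{−α/2} · min( 1 , ‖x − y‖/√(ϰr) ). -/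
open MeasureTheory Real
open scoped ENNReal

/-!
Write `s = ϰr` and let `f = |p(· - x) - p(· - y)|`, with `p` the centred Gaussian density of
variance `s`. The double integral is at most `‖f‖₁` times the supremum over `w` of
`∫ f(z) ‖w - z‖^(-α) dz`.

* Split that integral at `‖w - z‖ = √s`. The near part is at most
  `‖f‖_∞ ∫_{‖u‖ < √s} ‖u‖^(-α) du`, and the far part at most `s^(-α/2) ‖f‖₁`. Since
  `‖f‖_∞ ≤ (2πs)^(-d/2)` and `‖f‖₁ ≤ 2`, both are of order `s^(-α/2)`.
* The mean value theorem gives `|p(u) - p(v)| ≤ 2^(d/2) (‖u - v‖ / √s) (q(u) + q(v))`, where `q`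
  is the Gaussian density of variance `2s`; doubling the variance absorbs the factor `‖u‖ / √s`
  of `‖∇p(u)‖`. Integrating, `‖f‖₁` is of order `min(1, ‖x - y‖ / √s)`.
-/

theorem lintegral_lintegral_mul_mul_le {X Y : Type*} [MeasurableSpace X] [MeasurableSpace Y]
    {μ : Measure X} {ν : Measure Y} {f : X → ℝ≥0∞} {g : Y → ℝ≥0∞} {k : X → Y → ℝ≥0∞} {B : ℝ≥0∞}
    (hf : Measurable f) (hg : Measurable g) (hk : ∀ x, Measurable (k x))
    (hB : ∀ x, ∫⁻ y, g y * k x y ∂ν ≤ B) :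
    ∫⁻ x, ∫⁻ y, f x * g y * k x y ∂ν ∂μ ≤ B * ∫⁻ x, f x ∂μ :=
  calc ∫⁻ x, ∫⁻ y, f x * g y * k x y ∂ν ∂μ
    _ = ∫⁻ x, f x * ∫⁻ y, g y * k x y ∂ν ∂μ := by
      simp_rw [mul_assoc]
      exact lintegral_congr fun x ↦ lintegral_const_mul _ (hg.mul (hk x))
    _ ≤ ∫⁻ x, B * f x ∂μ := lintegral_mono fun x ↦ by grw [hB x, mul_comm]
    _ = B * ∫⁻ x, f x ∂μ := lintegral_const_mul _ hf

section NormRpow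

theorem lintegral_mul_norm_sub_rpow_neg_le {G : Type*} [NormedAddCommGroup G]
    [MeasurableSpace G] [BorelSpace G] (μ : Measure G) [μ.IsAddLeftInvariant] [μ.IsNegInvariant]
    {f : G → ℝ≥0∞} {M : ℝ≥0∞} (hfM : ∀ z, f z ≤ M) {α R : ℝ} (hα : 0 ≤ α) (hR : 0 < R) (w : G) :
    ∫⁻ z, f z * ENNReal.ofReal (‖w - z‖ ^ (-α)) ∂μ ≤
      M * ∫⁻ u in Metric.ball 0 R, ENNReal.ofReal (‖u‖ ^ (-α)) ∂μ +
        ENNReal.ofReal (R ^ (-α)) * ∫⁻ z, f z ∂μ := by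
  set near : G → ℝ≥0∞ :=
    (Metric.ball (0 : G) R).indicator fun u ↦ ENNReal.ofReal (‖u‖ ^ (-α)) with near_def
  have near_measurable : Measurable near :=
    Measurable.indicator (by fun_prop) measurableSet_ball
  have integrand_le (z : G) : f z * ENNReal.ofReal (‖w - z‖ ^ (-α)) ≤
      M * near (w - z) + ENNReal.ofReal (R ^ (-α)) * f z := by
    by_cases hz : ‖w - z‖ < R
    · rw [near_def, Set.indicator_of_mem (mem_ball_zero_iff.2 hz)]
      exact le_add_right (by gcongr; exact hfM z)
    · rw [mul_comm (f z)]
      refine le_add_left (mul_le_mul_left (ENNReal.ofReal_le_ofReal ?_) _)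
      exact rpow_le_rpow_of_nonpos hR (not_lt.1 hz) (neg_nonpos.2 hα)
  calc ∫⁻ z, f z * ENNReal.ofReal (‖w - z‖ ^ (-α)) ∂μ
    _ ≤ ∫⁻ z, (M * near (w - z) + ENNReal.ofReal (R ^ (-α)) * f z) ∂μ := lintegral_mono integrand_le
    _ = M * ∫⁻ u, near u ∂μ + ENNReal.ofReal (R ^ (-α)) * ∫⁻ z, f z ∂μ := by
      rw [lintegral_add_left (by fun_prop), lintegral_const_mul _ (by fun_prop),
        lintegral_sub_left_eq_self near, lintegral_const_mul' _ _ ENNReal.ofReal_ne_top]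
    _ = _ := by rw [near_def, lintegral_indicator measurableSet_ball]

variable {E : Type*} [NormedAddCommGroup E] [NormedSpace ℝ E] [FiniteDimensional ℝ E]
  [MeasurableSpace E] [BorelSpace E] (μ : Measure E) [μ.IsAddHaarMeasure] {α R : ℝ}

theorem integral_ball_norm_rpow_neg (hR : 0 < R) :
    ∫ u in Metric.ball (0 : E) R, ‖u‖ ^ (-α) ∂μ =
      R ^ (Module.finrank ℝ E - α) * ∫ u in Metric.ball (0 : E) 1, ‖u‖ ^ (-α) ∂μ := by
  have scaled := Measure.setIntegral_comp_smul_of_pos μ (fun u : E ↦ ‖u‖ ^ (-α))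
    (Metric.ball 0 1) hR
  have norm_smul_rpow (u : E) : ‖R • u‖ ^ (-α) = R ^ (-α) * ‖u‖ ^ (-α) := by
    rw [norm_smul_of_nonneg hR.le, mul_rpow hR.le (norm_nonneg u)]
  simp only [norm_smul_rpow, integral_const_mul, smul_unitBall_of_pos hR, smul_eq_mul] at scaled
  rw [sub_eq_add_neg, rpow_add hR, rpow_natCast, mul_assoc, scaled,
    mul_inv_cancel_left₀ (by positivity)]

theorem lintegral_ball_norm_rpow_neg (hE : 0 < Module.finrank ℝ E) (hα : α < Module.finrank ℝ E)
    (hR : 0 < R) :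
    ∫⁻ u in Metric.ball (0 : E) R, ENNReal.ofReal (‖u‖ ^ (-α)) ∂μ =
      ENNReal.ofReal (R ^ (Module.finrank ℝ E - α) *
        ∫ u in Metric.ball (0 : E) 1, ‖u‖ ^ (-α) ∂μ) := by
  have integrable : IntegrableOn (fun u : E ↦ ‖u‖ ^ (-α)) (Metric.ball 0 R) μ :=
    integrableOn_ball_of_norm_le_rpow hE hα (C := 1)
      (.of_forall fun u ↦ by rw [one_mul, norm_of_nonneg (by positivity)])
      (by fun_prop : Measurable fun u : E ↦ ‖u‖ ^ (-α)).aestronglyMeasurable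
  rw [← integral_ball_norm_rpow_neg μ hR,
    ofReal_integral_eq_lintegral_ofReal integrable (.of_forall fun u ↦ by positivity)]

end NormRpow

section ExpNegSq

theorem abs_exp_neg_sq_div_two_sub_le_of_le {a b : ℝ} (ha : 0 ≤ a) (hab : a ≤ b) :
    |exp (-b ^ 2 / 2) - exp (-a ^ 2 / 2)| ≤ exp (-a ^ 2 / 4) * (b - a) := by
  have hasDeriv (t : ℝ) : HasDerivAt (fun t ↦ exp (-t ^ 2 / 2)) (exp (-t ^ 2 / 2) * -t) t := by
    convert! ((hasDerivAt_pow 2 t).fun_neg.div_const 2).exp using 1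
    ring
  have deriv_le (t : ℝ) (hat : a ≤ t) : ‖exp (-t ^ 2 / 2) * -t‖ ≤ exp (-a ^ 2 / 4) := by
    have ht : 0 ≤ t := ha.trans hat
    have le_exp : t ≤ exp (t ^ 2 / 4) := by
      nlinarith [add_one_le_exp (t ^ 2 / 4), sq_nonneg (t - 2)]
    calc ‖exp (-t ^ 2 / 2) * -t‖
      _ = exp (-t ^ 2 / 2) * t := by
        rw [norm_mul, norm_neg, norm_of_nonneg (exp_nonneg _), norm_of_nonneg ht]
      _ ≤ exp (-t ^ 2 / 2) * exp (t ^ 2 / 4) := by gcongr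
      _ = exp (-t ^ 2 / 4) := by rw [← exp_add]; ring_nf
      _ ≤ exp (-a ^ 2 / 4) := by gcongr
  exact norm_image_sub_le_of_norm_deriv_le_segment' (fun t _ ↦ (hasDeriv t).hasDerivWithinAt)
    (fun t ht ↦ deriv_le t ht.1) b (Set.right_mem_Icc.2 hab)

theorem abs_exp_neg_sq_div_two_sub_le {a b : ℝ} (ha : 0 ≤ a) (hb : 0 ≤ b) :
    |exp (-a ^ 2 / 2) - exp (-b ^ 2 / 2)| ≤
      |a - b| * (exp (-a ^ 2 / 4) + exp (-b ^ 2 / 4)) := by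
  wlog hab : a ≤ b generalizing a b
  · rw [abs_sub_comm, abs_sub_comm a b, add_comm]
    exact this hb ha (le_of_not_ge hab)
  rw [abs_sub_comm, abs_sub_comm a b, abs_of_nonneg (sub_nonneg.2 hab), mul_comm]
  refine (abs_exp_neg_sq_div_two_sub_le_of_le ha hab).trans ?_
  gcongr
  exact le_add_of_nonneg_right (exp_nonneg _)

end ExpNegSq

section GaussianDensity

variable {E : Type*} [NormedAddCommGroup E] [InnerProductSpace ℝ E] {s : ℝ}

/-- The centred Gaussian density of variance `s` in every direction. The heat kernel
`heatKernel d ϰ t` is the case `s = ϰ t` on `ℝ^d`. -/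
noncomputable def gaussianDensity (s : ℝ) (z : E) : ℝ :=
  (2 * π * s) ^ (-(Module.finrank ℝ E : ℝ) / 2) * exp (-‖z‖ ^ 2 / (2 * s))

theorem heatKernel_eq_gaussianDensity (d : ℕ) (ϰ t : ℝ) :
    heatKernel d ϰ t = gaussianDensity (ϰ * t) := by
  ext z
  simp only [heatKernel, gaussianDensity, finrank_euclideanSpace_fin, mul_assoc]

theorem gaussianDensity_nonneg (hs : 0 ≤ s) (z : E) : 0 ≤ gaussianDensity s z := by
  unfold gaussianDensity
  positivity

theorem gaussianDensity_le (hs : 0 ≤ s) (z : E) :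
    gaussianDensity s z ≤ (2 * π * s) ^ (-(Module.finrank ℝ E : ℝ) / 2) := by
  refine mul_le_of_le_one_right (by positivity) (exp_le_one_iff.2 ?_)
  exact div_nonpos_of_nonpos_of_nonneg (neg_nonpos.2 (by positivity)) (by positivity)

theorem two_rpow_mul_gaussianDensity_two_mul (hs : 0 < s) (z : E) :
    2 ^ ((Module.finrank ℝ E : ℝ) / 2) * gaussianDensity (2 * s) z =
      (2 * π * s) ^ (-(Module.finrank ℝ E : ℝ) / 2) * exp (-‖z‖ ^ 2 / (4 * s)) := by
  rw [gaussianDensity, mul_left_comm _ 2 s, mul_rpow zero_le_two (by positivity), ← mul_assoc,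
    ← mul_assoc, neg_div (2 : ℝ), ← rpow_add two_pos, add_neg_cancel, rpow_zero, one_mul,
    ← mul_assoc 2 2 s, show (2 : ℝ) * 2 = 4 by norm_num]

theorem abs_gaussianDensity_sub_le (hs : 0 < s) (u v : E) :
    |gaussianDensity s u - gaussianDensity s v| ≤
      2 ^ ((Module.finrank ℝ E : ℝ) / 2) * (‖u - v‖ / √s) *
        (gaussianDensity (2 * s) u + gaussianDensity (2 * s) v) := by
  set c := (2 * π * s) ^ (-(Module.finrank ℝ E : ℝ) / 2)
  have hc : 0 ≤ c := by positivity
  have normalized (z : E) : gaussianDensity s z = c * exp (-(‖z‖ / √s) ^ 2 / 2) := by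
    rw [gaussianDensity, div_pow, sq_sqrt hs.le]
    congr 2
    field_simp
  have normalized_two (z : E) : 2 ^ ((Module.finrank ℝ E : ℝ) / 2) * gaussianDensity (2 * s) z =
      c * exp (-(‖z‖ / √s) ^ 2 / 4) := by
    rw [two_rpow_mul_gaussianDensity_two_mul hs, div_pow, sq_sqrt hs.le]
    congr 2
    field_simp
  have abs_sub_le : |‖u‖ / √s - ‖v‖ / √s| ≤ ‖u - v‖ / √s := by
    rw [← sub_div, abs_div, abs_of_nonneg (sqrt_nonneg s)]
    gcongr
    exact abs_norm_sub_norm_le u v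
  calc |gaussianDensity s u - gaussianDensity s v|
    _ = c * |exp (-(‖u‖ / √s) ^ 2 / 2) - exp (-(‖v‖ / √s) ^ 2 / 2)| := by
      rw [normalized, normalized, ← mul_sub, abs_mul, abs_of_nonneg hc]
    _ ≤ c * (‖u - v‖ / √s * (exp (-(‖u‖ / √s) ^ 2 / 4) + exp (-(‖v‖ / √s) ^ 2 / 4))) := by
      grw [abs_exp_neg_sq_div_two_sub_le (by positivity) (by positivity), abs_sub_le]
    _ = _ := by linear_combination (-‖u - v‖ / √s) * (normalized_two u + normalized_two v)

variable [MeasurableSpace E] [BorelSpace E]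

@[fun_prop]
theorem measurable_gaussianDensity : Measurable (gaussianDensity s : E → ℝ) := by
  unfold gaussianDensity
  fun_prop

variable [FiniteDimensional ℝ E]

theorem lintegral_gaussianDensity (hs : 0 < s) :
    ∫⁻ z : E, ENNReal.ofReal (gaussianDensity s z) = 1 := by
  have integral_eq_one : ∫ z : E, gaussianDensity s z = 1 := by
    have integral_exp := GaussianFourier.integral_rexp_neg_mul_sq_norm (V := E)
      (inv_pos.2 (mul_pos two_pos hs))
    simp only [neg_mul, inv_mul_eq_div, ← neg_div, div_inv_eq_mul] at integral_exp
    simp only [gaussianDensity, integral_const_mul]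
    rw [integral_exp, mul_left_comm π, ← mul_assoc, ← rpow_add (by positivity), neg_div,
      neg_add_cancel, rpow_zero]
  rw [← ofReal_integral_eq_lintegral_ofReal (integrable_of_integral_eq_one integral_eq_one)
    (.of_forall (gaussianDensity_nonneg hs.le)), integral_eq_one, ENNReal.ofReal_one]

theorem lintegral_gaussianDensity_sub_add (hs : 0 < s) (x y : E) :
    ∫⁻ w, ENNReal.ofReal (gaussianDensity s (w - x) + gaussianDensity s (w - y)) = 2 := by
  simp_rw [ENNReal.ofReal_add (gaussianDensity_nonneg hs.le _) (gaussianDensity_nonneg hs.le _)]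
  rw [lintegral_add_left (by fun_prop),
    lintegral_sub_right_eq_self fun z ↦ ENNReal.ofReal (gaussianDensity s z),
    lintegral_sub_right_eq_self fun z ↦ ENNReal.ofReal (gaussianDensity s z),
    lintegral_gaussianDensity hs, one_add_one_eq_two]

theorem lintegral_abs_gaussianDensity_sub_le_two (hs : 0 < s) (x y : E) :
    ∫⁻ w, ENNReal.ofReal |gaussianDensity s (w - x) - gaussianDensity s (w - y)| ≤ 2 := by
  rw [← lintegral_gaussianDensity_sub_add hs x y]
  gcongr with w
  have hx := gaussianDensity_nonneg hs.le (w - x)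
  have hy := gaussianDensity_nonneg hs.le (w - y)
  exact abs_sub_le_iff.2 ⟨by linarith, by linarith⟩

theorem lintegral_abs_gaussianDensity_sub_le_norm_sub (hs : 0 < s) (x y : E) :
    ∫⁻ w, ENNReal.ofReal |gaussianDensity s (w - x) - gaussianDensity s (w - y)| ≤
      ENNReal.ofReal (2 ^ ((Module.finrank ℝ E : ℝ) / 2) * (‖x - y‖ / √s)) * 2 := by
  have hs₂ : 0 < 2 * s := mul_pos two_pos hs
  rw [← lintegral_gaussianDensity_sub_add hs₂ x y,
    ← lintegral_const_mul' _ _ ENNReal.ofReal_ne_top]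
  gcongr with w
  rw [← ENNReal.ofReal_mul (by positivity)]
  refine ENNReal.ofReal_le_ofReal ((abs_gaussianDensity_sub_le hs _ _).trans_eq ?_)
  rw [sub_sub_sub_cancel_left, norm_sub_rev]

theorem lintegral_abs_gaussianDensity_sub_le (hs : 0 < s) (x y : E) :
    ∫⁻ w, ENNReal.ofReal |gaussianDensity s (w - x) - gaussianDensity s (w - y)| ≤
      ENNReal.ofReal (2 ^ ((Module.finrank ℝ E : ℝ) / 2) * 2 * min 1 (‖x - y‖ / √s)) := by
  have one_le : (1 : ℝ) ≤ 2 ^ ((Module.finrank ℝ E : ℝ) / 2) :=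
    one_le_rpow one_le_two (by positivity)
  rcases min_choice 1 (‖x - y‖ / √s) with hmin | hmin <;> rw [hmin]
  · refine (lintegral_abs_gaussianDensity_sub_le_two hs x y).trans ?_
    rw [← ENNReal.ofReal_ofNat 2]
    exact ENNReal.ofReal_le_ofReal (by linarith)
  · refine (lintegral_abs_gaussianDensity_sub_le_norm_sub hs x y).trans_eq ?_
    rw [← ENNReal.ofReal_ofNat 2, ← ENNReal.ofReal_mul (by positivity), mul_right_comm]

theorem lintegral_abs_gaussianDensity_sub_mul_norm_sub_rpow_neg_le {α : ℝ}
    (hα : α ∈ Set.Ico 0 (Module.finrank ℝ E : ℝ)) (hs : 0 < s) (x y w : E) :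
    ∫⁻ z, ENNReal.ofReal |gaussianDensity s (z - x) - gaussianDensity s (z - y)| *
        ENNReal.ofReal (‖w - z‖ ^ (-α)) ≤
      ENNReal.ofReal (((2 * π) ^ (-(Module.finrank ℝ E : ℝ) / 2) *
        (∫ u in Metric.ball (0 : E) 1, ‖u‖ ^ (-α)) + 2) * s ^ (-α / 2)) := by
  have hE : 0 < Module.finrank ℝ E := Nat.cast_pos.1 (hα.1.trans_lt hα.2)
  have sqrt_rpow (β : ℝ) : √s ^ β = s ^ (β / 2) := by
    rw [sqrt_eq_rpow, ← rpow_mul hs.le, one_div_mul_eq_div]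
  have abs_sub_le_peak (z : E) :
      ENNReal.ofReal |gaussianDensity s (z - x) - gaussianDensity s (z - y)| ≤
        ENNReal.ofReal ((2 * π * s) ^ (-(Module.finrank ℝ E : ℝ) / 2)) :=
    ENNReal.ofReal_le_ofReal <| abs_sub_le_of_nonneg_of_le
      (gaussianDensity_nonneg hs.le _) (gaussianDensity_le hs.le _)
      (gaussianDensity_nonneg hs.le _) (gaussianDensity_le hs.le _)
  grw [lintegral_mul_norm_sub_rpow_neg_le volume abs_sub_le_peak hα.1 (sqrt_pos.2 hs) w,
    lintegral_ball_norm_rpow_neg volume hE hα.2 (sqrt_pos.2 hs),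
    lintegral_abs_gaussianDensity_sub_le_two hs x y]
  rw [← ENNReal.ofReal_ofNat 2, ← ENNReal.ofReal_mul (by positivity),
    ← ENNReal.ofReal_mul (by positivity), ← ENNReal.ofReal_add (by positivity) (by positivity),
    sqrt_rpow, sqrt_rpow, mul_rpow (by positivity) hs.le,
    show s ^ (-α / 2) = s ^ (-(Module.finrank ℝ E : ℝ) / 2) *
      s ^ ((Module.finrank ℝ E - α) / 2) by rw [← rpow_add hs]; ring_nf]
  exact le_of_eq (by ring_nf)

theorem stmt15_general {α : ℝ} (hα : α ∈ Set.Ico 0 (Module.finrank ℝ E : ℝ)) :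
    ∃ C : ℝ, 0 < C ∧ ∀ s > (0 : ℝ), ∀ x y : E,
      ∫⁻ w, ∫⁻ z, ENNReal.ofReal
          (|gaussianDensity s (w - x) - gaussianDensity s (w - y)| *
            |gaussianDensity s (z - x) - gaussianDensity s (z - y)| * ‖w - z‖ ^ (-α)) ≤
        ENNReal.ofReal (C * s ^ (-α / 2) * min 1 (‖x - y‖ / √s)) := by
  refine ⟨((2 * π) ^ (-(Module.finrank ℝ E : ℝ) / 2) *
    (∫ u in Metric.ball (0 : E) 1, ‖u‖ ^ (-α)) + 2) * (2 ^ ((Module.finrank ℝ E : ℝ) / 2) * 2),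
    by positivity, fun s hs x y ↦ ?_⟩
  have measurable_abs_sub : Measurable fun w ↦
      ENNReal.ofReal |gaussianDensity s (w - x) - gaussianDensity s (w - y)| := by
    fun_prop
  simp_rw [ENNReal.ofReal_mul (mul_nonneg (abs_nonneg _) (abs_nonneg _)),
    ENNReal.ofReal_mul (abs_nonneg _)]
  grw [lintegral_lintegral_mul_mul_le measurable_abs_sub measurable_abs_sub (by fun_prop)
    (lintegral_abs_gaussianDensity_sub_mul_norm_sub_rpow_neg_le hα hs x y),
    lintegral_abs_gaussianDensity_sub_le hs x y]
  rw [← ENNReal.ofReal_mul (by positivity)]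
  exact ENNReal.ofReal_le_ofReal (le_of_eq (by ring))

end GaussianDensity

/-- For `α ∈ (0,d)` there is `C = C(d,α) < ∞` such that for all `r > 0`
and `x, y ∈ ℝ^d`,
`∬ |p_r(w-x)-p_r(w-y)| |p_r(z-x)-p_r(z-y)| ‖w-z‖^{-α} dw dz
  ≤ C (ϰr)^{-α/2} min(1, ‖x-y‖/√(ϰr))`. -/
theorem stmt15 (d : ℕ) (hd : 1 ≤ d) (α ϰ : ℝ) (hα : α ∈ Set.Ioo (0:ℝ) (d:ℝ)) (hϰ : 0 < ϰ) :
    ∃ C : ℝ, 0 < C ∧ ∀ r > (0:ℝ), ∀ x y : EuclideanSpace ℝ (Fin d),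
      (∫⁻ w, ∫⁻ z, ENNReal.ofReal
          (|heatKernel d ϰ r (w - x) - heatKernel d ϰ r (w - y)| *
            |heatKernel d ϰ r (z - x) - heatKernel d ϰ r (z - y)| * ‖w - z‖ ^ (-α))) ≤
        ENNReal.ofReal (C * (ϰ * r) ^ (-α / 2) * min 1 (‖x - y‖ / Real.sqrt (ϰ * r))) := by
  obtain ⟨C, hC, energy_le⟩ := stmt15_general (E := EuclideanSpace ℝ (Fin d)) (α := α)
    (by simpa using ⟨hα.1.le, hα.2⟩)
  exact ⟨C, hC, fun r hr ↦ by
    simpa only [heatKernel_eq_gaussianDensity] using energy_le (ϰ * r) (mul_pos hϰ hr)⟩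
end
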